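/- For every ordinal α < ε₀ and natural numbers n, x, m: if α ↘ₙˣ 0 and m ≤ n, then α ↘ₙˣ {α}(m). -/

import Mathlib

/-!
Once the `n`-descent from `α` has reached `0` it stays there, so the bound `x` plays no role: it
suffices that `fs α m` occurs somewhere in the `n`-descent from `α` (`step_fs`).

Descents act on the last summand, so they lift to sums (`Step.oadd`). Every ordinal descends to `0`
(`step_zero`); hence `ω^p·(n+1)` descends to `ω^p·(m+1)` for `m ≤ n` by consuming one copy of `ω^p`
at a time (`step_coeff`), which settles exponents that are successors. For limit exponents,
descents lift through `α ↦ ω^α` (`Step.omega`): a step from `ω^(p+1)` lands on `ω^p·(n+1)`, which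
descends further to `ω^p`.

The lemmas hold for raw notations, in normal form or not, because `step_zero` is proved by
structural induction rather than by well-foundedness of the ordinals.
-/


namespace Paper

/-- `pred? o = some β` when the notation `o` denotes a successor ordinal `β + 1`;
`pred? o = none` when `o` denotes `0` or a limit ordinal. -/
def pred? : ONote → Option ONote
  | ONote.zero => none
  | ONote.oadd e m a =>
    match a with
    | ONote.oadd e' m' a' => (pred? (ONote.oadd e' m' a')).map (ONote.oadd e m)
    | ONote.zero => if e = 0 then some (ONote.ofNat ((m : ℕ) - 1)) else none

/-- The fundamental sequence: `fs α n` is `{α}(n)`.  We have `{0}(n) = 0`,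
`{β+1}(n) = β`, `{γ + ω^(δ+1)}(n) = γ + ω^δ·(n+1)` and `{γ + ω^δ}(n) = γ + ω^({δ}(n))`
for `δ` a limit. -/
def fs : ONote → ℕ → ONote
  | ONote.zero, _ => ONote.zero
  | ONote.oadd e m a, n =>
    match a with
    | ONote.oadd e' m' a' => ONote.oadd e m (fs (ONote.oadd e' m' a') n)
    | ONote.zero =>
      match e with
      | ONote.zero => ONote.ofNat ((m : ℕ) - 1)
      | ONote.oadd e1 m1 a1 =>
        let tail : ONote :=
          match pred? (ONote.oadd e1 m1 a1) with
          | some p => ONote.oadd p ⟨n + 1, n.succ_pos⟩ ONote.zero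
          | none => ONote.oadd (fs (ONote.oadd e1 m1 a1) n) 1 ONote.zero
        if (m : ℕ) = 1 then tail
        else ONote.oadd (ONote.oadd e1 m1 a1) ⟨max ((m : ℕ) - 1) 1, by omega⟩ tail

/-- Iteration of the fundamental sequence: `fund α n x` applies `{·}(n)` to `α`, `x` times. -/
def fund (α : ONote) (n : ℕ) : ℕ → ONote
  | 0 => α
  | x + 1 => fs (fund α n x) n

/-- `StepAt α n x β` expresses `α ↘ₙˣ β`: some `y ≤ x` has `fund α n y = β`. -/
def StepAt (α : ONote) (n x : ℕ) (β : ONote) : Prop :=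
  ∃ y ≤ x, fund α n y = β

/-- `Step α n β` expresses `α ↘ₙ β`. -/
def Step (α : ONote) (n : ℕ) (β : ONote) : Prop :=
  ∃ x, StepAt α n x β


/-! ### Computation rules for fundamental sequences -/

theorem fs_zero (n : ℕ) : fs 0 n = 0 := by
  change fs ONote.zero n = ONote.zero
  rw [fs]

theorem fs_oadd_of_ne_zero (e : ONote) (k : ℕ+) {a : ONote} (ha : a ≠ 0) (n : ℕ) :
    fs (ONote.oadd e k a) n = ONote.oadd e k (fs a n) := by
  cases a with
  | zero => exact absurd rfl ha
  | oadd e' m' a' => rw [fs]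

/-- `{ω^e·(k+1)}(n) = ω^e·k + {ω^e}(n)`, uniformly in `e` (including `e = 0`). -/
theorem fs_coeff_succ (e : ONote) (k : ℕ+) (n : ℕ) :
    fs (ONote.oadd e (k + 1) 0) n = ONote.oadd e k (fs (ONote.oadd e 1 0) n) := by
  change fs (ONote.oadd e (k + 1) ONote.zero) n
    = ONote.oadd e k (fs (ONote.oadd e 1 ONote.zero) n)
  cases e with
  | zero =>
    obtain ⟨j, rfl⟩ : ∃ j : ℕ, k = j.succPNat := ⟨k.natPred, by simp⟩
    simp only [fs]
    rfl
  | oadd e1 m1 a1 =>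
    have hk : ((k + 1 : ℕ+) : ℕ) ≠ 1 := by
      have := k.pos
      simp
    have hk' : (⟨max (((k + 1 : ℕ+) : ℕ) - 1) 1, by omega⟩ : ℕ+) = k := by
      apply PNat.eq
      have := k.pos
      simp only [PNat.mk_coe, PNat.add_coe, PNat.one_coe]
      omega
    rw [fs, fs, if_neg hk, if_pos PNat.one_coe, hk']

theorem fs_omega_succ {e p : ONote} (h : pred? e = some p) (n : ℕ) :
    fs (ONote.oadd e 1 0) n = ONote.oadd p n.succPNat 0 := by
  change fs (ONote.oadd e 1 ONote.zero) n = _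
  cases e with
  | zero => simp [pred?] at h
  | oadd e1 m1 a1 =>
    rw [fs, if_pos PNat.one_coe, h]
    rfl

theorem fs_omega_limit {e : ONote} (he : e ≠ 0) (h : pred? e = none) (n : ℕ) :
    fs (ONote.oadd e 1 0) n = ONote.oadd (fs e n) 1 0 := by
  change fs (ONote.oadd e 1 ONote.zero) n = _
  cases e with
  | zero => exact absurd rfl he
  | oadd e1 m1 a1 =>
    rw [fs, if_pos PNat.one_coe, h]
    rfl

theorem fs_omega_zero (n : ℕ) : fs (ONote.oadd 0 1 0) n = 0 := by
  change fs (ONote.oadd ONote.zero 1 ONote.zero) n = 0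
  rw [fs]
  rfl

theorem fs_eq_of_pred (e : ONote) : ∀ {p : ONote}, pred? e = some p → ∀ n, fs e n = p := by
  induction e with
  | zero => intro p h; simp [pred?] at h
  | oadd e m a _ iha =>
    intro p h n
    cases a with
    | zero =>
      rw [pred?] at h
      split_ifs at h with he
      subst he
      change fs (ONote.oadd ONote.zero m ONote.zero) n = p
      rw [fs]
      exact Option.some.inj h
    | oadd e' m' a' =>
      rw [pred?, Option.map_eq_some_iff] at h
      obtain ⟨q, hq, rfl⟩ := h
      rw [fs, iha hq n]

/-- Proper decrease, stated as `{α}(n) ≠ α` so that it holds for raw notations as well. -/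
theorem fs_ne_self (α : ONote) (hα : α ≠ 0) (n : ℕ) : fs α n ≠ α := by
  induction α with
  | zero => exact absurd rfl hα
  | oadd e k a ihe iha =>
    by_cases ha : a = 0
    · subst ha
      obtain rfl | hk := eq_or_ne k 1
      · by_cases he : e = 0
        · subst he
          rw [fs_omega_zero]
          rintro ⟨⟩
        cases hp : pred? e with
        | none =>
          rw [fs_omega_limit he hp]
          intro h
          injection h with h
          exact ihe he h
        | some p =>
          rw [fs_omega_succ hp]
          intro h
          injection h with h
          exact ihe he ((fs_eq_of_pred e hp n).trans h)
      · obtain ⟨j, rfl⟩ := PNat.exists_eq_succ_of_ne_one hk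
        rw [fs_coeff_succ]
        intro h
        injection h with _ h
        have := congrArg PNat.val h
        simp at this
    · rw [fs_oadd_of_ne_zero e k ha]
      intro h
      injection h with _ _ h
      exact iha ha h

/-! ### Descents -/

theorem fund_add (α : ONote) (n y z : ℕ) : fund α n (y + z) = fund (fund α n y) n z := by
  induction z with
  | zero => rfl
  | succ z ih => rw [← add_assoc, fund, fund, ih]

theorem fund_zero_left (n z : ℕ) : fund 0 n z = 0 := by
  induction z with
  | zero => rfl
  | succ z ih => rw [fund, ih, fs_zero]

theorem step_of_fund (α : ONote) (n y : ℕ) : Step α n (fund α n y) := ⟨y, y, le_rfl, rfl⟩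

theorem Step.exists_fund {α β : ONote} {n : ℕ} (h : Step α n β) : ∃ y, fund α n y = β := by
  obtain ⟨_, y, _, hy⟩ := h
  exact ⟨y, hy⟩

theorem Step.refl (α : ONote) (n : ℕ) : Step α n α := step_of_fund α n 0

theorem Step.one (α : ONote) (n : ℕ) : Step α n (fs α n) := step_of_fund α n 1

theorem Step.trans {α β γ : ONote} {n : ℕ} (h₁ : Step α n β) (h₂ : Step β n γ) :
    Step α n γ := by
  obtain ⟨y, rfl⟩ := h₁.exists_fund
  obtain ⟨z, rfl⟩ := h₂.exists_fund
  rw [← fund_add]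
  exact step_of_fund _ _ _

theorem Step.fs_left {α β : ONote} {n : ℕ} (h : Step α n β) (hne : β ≠ α) :
    Step (fs α n) n β := by
  obtain ⟨y, rfl⟩ := h.exists_fund
  cases y with
  | zero => exact absurd rfl hne
  | succ y =>
    rw [add_comm, fund_add]
    exact step_of_fund _ _ _

theorem Step.oadd {a b : ONote} {n : ℕ} (h : Step a n b) (e : ONote) (k : ℕ+) :
    Step (ONote.oadd e k a) n (ONote.oadd e k b) := by
  obtain ⟨y, rfl⟩ := h.exists_fund
  induction y with
  | zero => exact Step.refl _ _
  | succ y ih =>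
    refine (ih (step_of_fund _ _ _)).trans ?_
    rw [fund]
    by_cases h0 : fund a n y = 0
    · rw [h0, fs_zero]
      exact Step.refl _ _
    · rw [← fs_oadd_of_ne_zero e k h0]
      exact Step.one _ _

/-- If `ω^e ↘ₙ 0`, the copies of `ω^e` in `ω^e·(j+1)` can be consumed one at a time. -/
theorem step_coeff {e : ONote} {n : ℕ} (h : Step (ONote.oadd e 1 0) n 0) {i j : ℕ}
    (hij : i ≤ j) : Step (ONote.oadd e j.succPNat 0) n (ONote.oadd e i.succPNat 0) := by
  induction j, hij using Nat.le_induction with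
  | base => exact Step.refl _ _
  | succ j _ ih =>
    refine Step.trans ?_ ih
    have h2 : Step (fs (ONote.oadd e 1 0) n) n 0 := h.fs_left (by rintro ⟨⟩)
    have h3 := h2.oadd e j.succPNat
    rw [← fs_coeff_succ] at h3
    exact (Step.one _ _).trans h3

theorem step_coeff_zero {e : ONote} {n : ℕ} (h : Step (ONote.oadd e 1 0) n 0) (k : ℕ+) :
    Step (ONote.oadd e k 0) n 0 := by
  have h1 := step_coeff h (Nat.zero_le k.natPred)
  rw [PNat.succPNat_natPred] at h1
  exact h1.trans h

theorem step_omega_zero {e : ONote} {n : ℕ} (h : Step e n 0) :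
    Step (ONote.oadd e 1 0) n 0 := by
  obtain ⟨y, hy⟩ := h.exists_fund
  induction y generalizing e with
  | zero =>
    obtain rfl : e = 0 := hy
    have h1 := Step.one (ONote.oadd 0 1 0) n
    rwa [fs_omega_zero] at h1
  | succ y ih =>
    rw [add_comm, fund_add] at hy
    have h1 : Step (ONote.oadd (fs e n) 1 0) n 0 := ih (hy ▸ step_of_fund _ _ _) hy
    have h2 := Step.one (ONote.oadd e 1 0) n
    by_cases he : e = 0
    · subst he
      rwa [fs_omega_zero] at h2
    cases hp : pred? e with
    | none =>
      rw [fs_omega_limit he hp] at h2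
      exact h2.trans h1
    | some p =>
      rw [fs_omega_succ hp] at h2
      rw [fs_eq_of_pred e hp] at h1
      exact h2.trans (step_coeff_zero h1 _)

theorem step_zero (α : ONote) (n : ℕ) : Step α n 0 := by
  induction α with
  | zero => exact Step.refl _ _
  | oadd e k a ihe iha => exact (iha.oadd e k).trans (step_coeff_zero (step_omega_zero ihe) k)

theorem Step.omega {a b : ONote} {n : ℕ} (h : Step a n b) :
    Step (ONote.oadd a 1 0) n (ONote.oadd b 1 0) := by
  obtain ⟨y, rfl⟩ := h.exists_fund
  induction y with
  | zero => exact Step.refl _ _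
  | succ y ih =>
    refine (ih (step_of_fund _ _ _)).trans ?_
    rw [fund]
    generalize fund a n y = c
    by_cases hc : c = 0
    · rw [hc, fs_zero]
      exact Step.refl _ _
    have h1 := Step.one (ONote.oadd c 1 0) n
    cases hp : pred? c with
    | none => rwa [fs_omega_limit hc hp] at h1
    | some p =>
      rw [fs_omega_succ hp] at h1
      rw [fs_eq_of_pred c hp]
      exact h1.trans (step_coeff (step_zero _ n) n.zero_le)

/-! ### The members of the fundamental sequence are reached -/

theorem step_fs (α : ONote) {m n : ℕ} (hm : m ≤ n) : Step α n (fs α m) := by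
  induction α with
  | zero => exact step_zero _ n
  | oadd e k a ihe iha =>
    by_cases ha : a = 0
    · subst ha
      have h1 : Step (ONote.oadd e 1 0) n (fs (ONote.oadd e 1 0) m) := by
        by_cases he : e = 0
        · subst he
          rw [fs_omega_zero]
          exact step_zero _ n
        cases hp : pred? e with
        | none =>
          rw [fs_omega_limit he hp]
          exact ihe.omega
        | some p =>
          have h2 := Step.one (ONote.oadd e 1 0) n
          rw [fs_omega_succ hp] at h2 ⊢
          exact h2.trans (step_coeff (step_zero _ n) hm)
      obtain rfl | hk := eq_or_ne k 1
      · exact h1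
      · obtain ⟨j, rfl⟩ := PNat.exists_eq_succ_of_ne_one hk
        -- The descent `ω^e ↘ₙ {ω^e}(m)` is nontrivial, so it passes through `{ω^e}(n)`;
        -- the part after that lifts to the sum `ω^e·j + {ω^e}(n) = {ω^e·(j+1)}(n)`.
        have h2 := (h1.fs_left (fs_ne_self _ (by rintro ⟨⟩) m)).oadd e j
        rw [← fs_coeff_succ, ← fs_coeff_succ] at h2
        exact (Step.one _ _).trans h2
    · rw [fs_oadd_of_ne_zero e k ha]
      exact iha.oadd e k

/-- If `α ↘ₙˣ 0` and `m ≤ n`, then `α ↘ₙˣ {α}(m)`. -/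
theorem stepAt_fs (α : ONote) (hα : α.NF) (n x m : ℕ)
    (h : StepAt α n x 0) (hm : m ≤ n) : StepAt α n x (fs α m) := by
  obtain ⟨y, hy⟩ := (step_fs α hm).exists_fund
  obtain ⟨z, hzx, hz⟩ := h
  by_cases hyx : y ≤ x
  · exact ⟨y, hyx, hy⟩
  · -- Here `z ≤ x < y`, so `fs α m` is reached after `0` and hence equals `0`.
    refine ⟨z, hzx, ?_⟩
    obtain ⟨d, rfl⟩ := Nat.exists_eq_add_of_le (show z ≤ y by omega)
    rw [← hy, fund_add, hz, fund_zero_left]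

end Paper
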